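/- Let n ≥ 1, let m ≥ 1 be a natural number, let p be a polynomial in n−1 variables with natural-number coefficients with p(J) ≥ 2 for all J ∈ ℕ^(n−1), and let ε : ℕ^(n−1) × ℕ → ℝ≥0 be bounded. Define q(J,k) := 2^(⌊log₂ p(J) · log₂ max(k,1)⌋^m). If the function (J,k) ↦ sup_{i∈ℕ} ε(J, q(J,k) + i) lies in FallU, then ε itself lies in FallU. (This is the purely analytic content of the paper's proposition that quasi-polynomial-time computability yields FallU-perfect estimation, in which ε(K) is the mean-squared error of an estimator P.) -/

import Mathlib

/-- The fall space `FallU` of rank `n = m + 1` (with `ℕⁿ` identified with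
`ℕᵐ × ℕ`): bounded nonnegative `ε : ℕᵐ × ℕ → ℝ` such that for some `M > 0`
and some polynomial `p` in `m` variables with natural coefficients with
`p(J) ≥ 4`, all partial sums `Σ_{2 ≤ k ≤ N} ε(J,k)/(k·log₂ k)` are at most
`M·log₂ log₂ p(J)`. -/
def FallU (m : ℕ) : Set ((Fin m → ℕ) × ℕ → ℝ) :=
  {ε | (∀ x, 0 ≤ ε x) ∧ (∃ C : ℝ, ∀ x, ε x ≤ C) ∧
    ∃ M : ℝ, 0 < M ∧ ∃ p : MvPolynomial (Fin m) ℕ,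
      (∀ J, 4 ≤ MvPolynomial.eval J p) ∧
      ∀ (J : Fin m → ℕ) (N : ℕ),
        (∑ k ∈ Finset.Icc 2 N, ε (J, k) / ((k : ℝ) * Real.logb 2 (k : ℝ)))
          ≤ M * Real.logb 2 (Real.logb 2 ((MvPolynomial.eval J p : ℕ) : ℝ))}

/-!
Fix `J`, put `e k = ε (J, k)` and `L = log₂ p(J)`, and let `E n = sup_{i ≥ n} e i`, an antitone
majorant of `e`. Since `∑ 1 / (k log₂ k)` grows like `log log`, the substitution
`k ↦ q(J, k) = 2 ^ (L log₂ k) ^ m` should only multiply such sums by `m`, up to an additive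
`log L` for the part below `q(J, 2)`. Discretely, this is three instances of Schlömilch's
condensation test. Along the powers of two, `∑ E k / (k log₂ k)` is comparable to `∑ E (2 ^ a) / a`.
Along the points `(A b) ^ m` with `A = ⌈L⌉`, whose relative gaps are at most `2 ^ m / b`, the latter
sum is at most `2 ^ m ∑ E (2 ^ (A b) ^ m) / b`, up to a harmonic sum. Along the powers of two again,
this is at most twice the sum of the hypothesis, because `q(J, 2 ^ b) ≤ 2 ^ (A b) ^ m`.
The additive `log L` is the reason why the bound for `ε` involves the polynomial `p * p'`, where
`p'` is the one for the hypothesis.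
-/

section Condensation

variable {f : ℕ → ℝ} {u : ℕ → ℕ}

theorem sum_Ico_le_sum_sub_mul (hu : Monotone u) (hf : AntitoneOn f (Set.Ici (u 0))) (n : ℕ) :
    ∑ k ∈ Finset.Ico (u 0) (u n), f k ≤
      ∑ j ∈ Finset.range n, ((u (j + 1) : ℝ) - u j) * f (u j) := by
  induction n with
  | zero => simp
  | succ n ih =>
    have hblock : ∑ k ∈ Finset.Ico (u n) (u (n + 1)), f k ≤ ((u (n + 1) : ℝ) - u n) * f (u n) := by
      have h := Finset.sum_le_card_nsmul (Finset.Ico (u n) (u (n + 1))) f (f (u n)) fun k hk =>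
        hf (hu n.zero_le) ((hu n.zero_le).trans (Finset.mem_Ico.1 hk).1) (Finset.mem_Ico.1 hk).1
      rwa [Nat.card_Ico, nsmul_eq_mul, Nat.cast_sub (hu n.le_succ)] at h
    rw [← Finset.sum_Ico_consecutive _ (hu n.zero_le) (hu n.le_succ), Finset.sum_range_succ]
    exact add_le_add ih hblock

theorem sum_sub_mul_le_sum_Ico (hu : Monotone u) (hf : AntitoneOn f (Set.Ici (u 0))) (n : ℕ) :
    ∑ j ∈ Finset.range n, ((u (j + 1) : ℝ) - u j) * f (u (j + 1)) ≤
      ∑ k ∈ Finset.Ico (u 0) (u n), f k := by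
  induction n with
  | zero => simp
  | succ n ih =>
    have hblock : ((u (n + 1) : ℝ) - u n) * f (u (n + 1)) ≤
        ∑ k ∈ Finset.Ico (u n) (u (n + 1)), f k := by
      have h := Finset.card_nsmul_le_sum (Finset.Ico (u n) (u (n + 1))) f (f (u (n + 1)))
        fun k hk => hf ((hu n.zero_le).trans (Finset.mem_Ico.1 hk).1) (hu (n + 1).zero_le)
            (Finset.mem_Ico.1 hk).2.le
      rwa [Nat.card_Ico, nsmul_eq_mul, Nat.cast_sub (hu n.le_succ)] at h
    rw [← Finset.sum_Ico_consecutive _ (hu n.zero_le) (hu n.le_succ), Finset.sum_range_succ]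
    exact add_le_add ih hblock

end Condensation

section LogSums

variable {g : ℕ → ℝ}

theorem mul_logb_two_natCast_nonneg (k : ℕ) : 0 ≤ (k : ℝ) * Real.logb 2 k :=
  mul_nonneg k.cast_nonneg (div_nonneg (Real.log_natCast_nonneg k) (Real.log_nonneg one_le_two))

theorem antitoneOn_div_mul_logb (hg : Antitone g) (hg₀ : ∀ k, 0 ≤ g k) :
    AntitoneOn (fun k : ℕ => g k / (k * Real.logb 2 k)) (Set.Ici 2) := by
  intro j (hj : 2 ≤ j) k _ hjk
  have hj' : (1 : ℝ) < j := by exact_mod_cast hj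
  have hjk' : (j : ℝ) ≤ k := by exact_mod_cast hjk
  have hlog : 0 < Real.logb 2 j := Real.logb_pos one_lt_two hj'
  have hlog_le : Real.logb 2 j ≤ Real.logb 2 k :=
    Real.logb_le_logb_of_le one_lt_two (by linarith) hjk'
  exact div_le_div₀ (hg₀ j) (hg hjk) (by positivity) (by gcongr)

theorem monotone_two_pow_succ : Monotone fun j : ℕ => 2 ^ (j + 1) := fun _ _ h =>
  Nat.pow_le_pow_right two_pos (Nat.succ_le_succ h)

theorem logb_two_two_pow (a : ℕ) : Real.logb 2 ((2 : ℝ) ^ a) = a := by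
  rw [Real.logb_pow, Real.logb_self_eq_one one_lt_two, mul_one]

theorem sum_div_mul_logb_le_sum_two_pow_div (hg : Antitone g) (hg₀ : ∀ k, 0 ≤ g k) (n : ℕ) :
    ∑ k ∈ Finset.Ico 2 (2 ^ (n + 1)), g k / (k * Real.logb 2 k) ≤
      ∑ a ∈ Finset.Ico 1 (n + 1), g (2 ^ a) / a := by
  have h := sum_Ico_le_sum_sub_mul monotone_two_pow_succ (antitoneOn_div_mul_logb hg hg₀) n
  refine h.trans_eq ?_
  rw [Finset.sum_Ico_eq_sum_range, Nat.add_sub_cancel]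
  refine Finset.sum_congr rfl fun j _ => ?_
  push_cast
  rw [logb_two_two_pow, add_comm 1 j]
  push_cast
  field_simp
  ring

theorem sum_two_pow_div_le_two_mul_sum_div_mul_logb (hg : Antitone g) (hg₀ : ∀ k, 0 ≤ g k)
    (n : ℕ) :
    ∑ b ∈ Finset.range n, g (2 ^ (b + 2)) / (b + 2) ≤
      2 * ∑ k ∈ Finset.Ico 2 (2 ^ (n + 1)), g k / (k * Real.logb 2 k) := by
  have h := sum_sub_mul_le_sum_Ico monotone_two_pow_succ (antitoneOn_div_mul_logb hg hg₀) n
  refine le_of_eq_of_le ?_ (mul_le_mul_of_nonneg_left h zero_le_two)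
  rw [Finset.mul_sum]
  refine Finset.sum_congr rfl fun b _ => ?_
  push_cast
  rw [logb_two_two_pow]
  push_cast
  field_simp
  ring

end LogSums

section PowerBlocks

theorem one_add_pow_le_one_add_mul {x : ℝ} (hx₀ : 0 ≤ x) (hx₁ : x ≤ 1) (m : ℕ) :
    (1 + x) ^ m ≤ 1 + (2 ^ m - 1) * x := by
  have h := (convexOn_pow m).2 (Set.mem_Ici.2 zero_le_one) (Set.mem_Ici.2 zero_le_two)
    (sub_nonneg.2 hx₁) hx₀ (sub_add_cancel 1 x)
  simp only [smul_eq_mul, one_pow] at h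
  calc (1 + x) ^ m = ((1 - x) * 1 + x * 2) ^ m := by ring
    _ ≤ (1 - x) * 1 + x * 2 ^ m := h
    _ = 1 + (2 ^ m - 1) * x := by ring

theorem add_one_pow_sub_pow_div_le {b : ℝ} (hb : 1 ≤ b) (m : ℕ) :
    ((b + 1) ^ m - b ^ m) / b ^ m ≤ 2 ^ m / b := by
  have hb₀ : 0 < b := by linarith
  calc ((b + 1) ^ m - b ^ m) / b ^ m = (1 + 1 / b) ^ m - 1 := by
        rw [sub_div, div_self (by positivity), ← div_pow, add_div, div_self hb₀.ne']
    _ ≤ (2 ^ m - 1) * (1 / b) := by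
        linarith [one_add_pow_le_one_add_mul (by positivity) ((div_le_one hb₀).2 hb) m]
    _ ≤ 2 ^ m / b := by rw [mul_one_div]; gcongr; linarith

variable {E : ℕ → ℝ} {A : ℕ}

theorem sum_Ico_mul_pow_div_le (hE : Antitone E) (hE₀ : ∀ a, 0 ≤ E a) (hA : 0 < A) (m n : ℕ) :
    ∑ a ∈ Finset.Ico ((A * 2) ^ m) ((A * (n + 2)) ^ m), E a / a ≤
      2 ^ m * ∑ b ∈ Finset.range n, E ((A * (b + 2)) ^ m) / (b + 2) := by
  have hu : Monotone fun b : ℕ => (A * (b + 2)) ^ m := fun b c hbc => by dsimp only; gcongr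
  have hf : AntitoneOn (fun a : ℕ => E a / a) (Set.Ici ((A * (0 + 2)) ^ m)) := by
    intro a ha c _ hac
    have ha₀ : (0 : ℝ) < a := by
      exact_mod_cast (show 0 < (A * (0 + 2)) ^ m by positivity).trans_le ha
    exact div_le_div₀ (hE₀ a) (hE hac) ha₀ (by exact_mod_cast hac)
  refine (sum_Ico_le_sum_sub_mul hu hf n).trans ?_
  rw [Finset.mul_sum]
  refine Finset.sum_le_sum fun b _ => ?_
  have hA' : (A : ℝ) ^ m ≠ 0 := by positivity
  push_cast
  calc ((A * (b + 1 + 2) : ℝ) ^ m - (A * (b + 2)) ^ m) *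
        (E ((A * (b + 2)) ^ m) / (A * (b + 2)) ^ m)
      = E ((A * (b + 2)) ^ m) * ((((b + 2 : ℝ) + 1) ^ m - (b + 2) ^ m) / (b + 2) ^ m) := by
        rw [add_right_comm (b : ℝ) 1 2, mul_pow, mul_pow]
        field_simp
    _ ≤ E ((A * (b + 2)) ^ m) * (2 ^ m / (b + 2)) :=
        mul_le_mul_of_nonneg_left
          (add_one_pow_sub_pow_div_le (by linarith [b.cast_nonneg (α := ℝ)]) m) (hE₀ _)
    _ = 2 ^ m * (E ((A * (b + 2)) ^ m) / (b + 2)) := by ring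

theorem sum_Ico_one_div_le_mul_one_add_log {C : ℝ} (hC₀ : 0 ≤ C) (hC : ∀ a, E a ≤ C) (n : ℕ) :
    ∑ a ∈ Finset.Ico 1 n, E a / a ≤ C * (1 + Real.log n) :=
  calc ∑ a ∈ Finset.Ico 1 n, E a / a
      ≤ ∑ a ∈ Finset.Ico 1 n, C * (a : ℝ)⁻¹ :=
        Finset.sum_le_sum fun a _ => by rw [div_eq_mul_inv]; gcongr; exact hC a
    _ ≤ ∑ a ∈ Finset.Icc 1 n, C * (a : ℝ)⁻¹ :=
        Finset.sum_le_sum_of_subset_of_nonneg Finset.Ico_subset_Icc_self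
          fun a _ _ => by positivity
    _ = C * (harmonic n : ℚ) := by rw [← Finset.mul_sum, harmonic_eq_sum_Icc]; push_cast; rfl
    _ ≤ C * (1 + Real.log n) := by gcongr; exact harmonic_le_one_add_log n

theorem sum_Ico_one_div_le_add_sum_mul_pow {C : ℝ} (hE : Antitone E) (hE₀ : ∀ a, 0 ≤ E a)
    (hC : ∀ a, E a ≤ C) (hA : 0 < A) (m n : ℕ) :
    ∑ a ∈ Finset.Ico 1 ((A * (n + 2)) ^ m), E a / a ≤
      C * (1 + m * Real.log (A * 2)) +
        2 ^ m * ∑ b ∈ Finset.range n, E ((A * (b + 2)) ^ m) / (b + 2) := by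
  have h_one : 1 ≤ (A * 2) ^ m := Nat.one_le_pow _ _ (by positivity)
  have h_le : (A * 2) ^ m ≤ (A * (n + 2)) ^ m := by gcongr; omega
  have h_head := sum_Ico_one_div_le_mul_one_add_log ((hE₀ 0).trans (hC 0)) hC ((A * 2) ^ m)
  rw [Nat.cast_pow, Real.log_pow, Nat.cast_mul, Nat.cast_ofNat] at h_head
  rw [← Finset.sum_Ico_consecutive _ h_one h_le]
  exact add_le_add h_head (sum_Ico_mul_pow_div_le hE hE₀ hA m n)

end PowerBlocks

/-- The least antitone majorant `n ↦ sup_{k ≥ n} e k` of a bounded sequence `e`, with the supremum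
indexed by `i = k - n`. For unbounded `e` it takes the junk value `0`. -/
noncomputable def tailSup (e : ℕ → ℝ) (n : ℕ) : ℝ :=
  ⨆ i : ℕ, e (n + i)

section TailSup

variable {e : ℕ → ℝ}

theorem le_tailSup (he : BddAbove (Set.range e)) {n k : ℕ} (h : n ≤ k) : e k ≤ tailSup e n := by
  have hbdd : BddAbove (Set.range fun i => e (n + i)) :=
    he.mono (Set.range_comp_subset_range (n + ·) e)
  calc e k = e (n + (k - n)) := by rw [Nat.add_sub_cancel' h]
    _ ≤ tailSup e n := le_ciSup hbdd (k - n)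

theorem antitone_tailSup (he : BddAbove (Set.range e)) : Antitone (tailSup e) :=
  fun _ _ h => ciSup_le fun _ => le_tailSup he (h.trans (Nat.le_add_right _ _))

theorem tailSup_nonneg (he₀ : ∀ k, 0 ≤ e k) (n : ℕ) : 0 ≤ tailSup e n :=
  Real.iSup_nonneg fun _ => he₀ _

theorem tailSup_le {C : ℝ} (hC : ∀ k, e k ≤ C) (n : ℕ) : tailSup e n ≤ C :=
  ciSup_le fun _ => hC _

end TailSup

section QuasiPolynomial

variable {E : ℕ → ℝ} {L : ℝ}

/-- The exponent of the quasi-polynomial `q(J, k) = 2 ^ quasiPolyExp L m k`, where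
`L = log₂ p(J)`. The maximum with `1` gives `k = 0` the value at `k = 1`. -/
noncomputable def quasiPolyExp (L : ℝ) (m k : ℕ) : ℕ :=
  ⌊L * Real.logb 2 ((max k 1 : ℕ) : ℝ)⌋₊ ^ m

theorem monotone_quasiPolyExp (hL : 0 ≤ L) (m : ℕ) : Monotone (quasiPolyExp L m) := by
  intro j k hjk
  have hj : (0 : ℝ) < (max j 1 : ℕ) := by positivity
  have hlog := Real.logb_le_logb_of_le one_lt_two hj
    (by exact_mod_cast max_le_max_right 1 hjk : ((max j 1 : ℕ) : ℝ) ≤ (max k 1 : ℕ))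
  exact Nat.pow_le_pow_left (Nat.floor_mono (mul_le_mul_of_nonneg_left hlog hL)) m

theorem quasiPolyExp_two_pow_le (L : ℝ) (m b : ℕ) :
    quasiPolyExp L m (2 ^ b) ≤ (⌈L⌉₊ * b) ^ m := by
  refine Nat.pow_le_pow_left (Nat.floor_le_of_le ?_) m
  rw [max_eq_left Nat.one_le_two_pow]
  push_cast
  rw [logb_two_two_pow]
  gcongr
  exact Nat.le_ceil L

theorem sum_mul_pow_div_le_of_sum_quasiPolyExp_le (hE : Antitone E) (hE₀ : ∀ a, 0 ≤ E a)
    (hL : 0 ≤ L) (m : ℕ) {S : ℝ}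
    (hS : ∀ N : ℕ, ∑ k ∈ Finset.Icc 2 N, E (quasiPolyExp L m k) / (k * Real.logb 2 k) ≤ S)
    (n : ℕ) :
    ∑ b ∈ Finset.range n, E ((⌈L⌉₊ * (b + 2)) ^ m) / (b + 2) ≤ 2 * S :=
  calc ∑ b ∈ Finset.range n, E ((⌈L⌉₊ * (b + 2)) ^ m) / (b + 2)
      ≤ ∑ b ∈ Finset.range n, E (quasiPolyExp L m (2 ^ (b + 2))) / (b + 2) := by
        gcongr
        exact hE (quasiPolyExp_two_pow_le L m _)
    _ ≤ 2 * ∑ k ∈ Finset.Ico 2 (2 ^ (n + 1)), E (quasiPolyExp L m k) / (k * Real.logb 2 k) :=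
        sum_two_pow_div_le_two_mul_sum_div_mul_logb
          (hE.comp_monotone (monotone_quasiPolyExp hL m)) (fun _ => hE₀ _) n
    _ ≤ 2 * ∑ k ∈ Finset.Icc 2 (2 ^ (n + 1)), E (quasiPolyExp L m k) / (k * Real.logb 2 k) := by
        gcongr
        · exact fun k _ _ => div_nonneg (hE₀ _) (mul_logb_two_natCast_nonneg k)
        · exact Finset.Ico_subset_Icc_self
    _ ≤ 2 * S := by gcongr; exact hS _

theorem sum_div_mul_logb_le_of_tailSup_quasiPolyExp {e : ℕ → ℝ} {C S : ℝ} {m : ℕ}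
    (he₀ : ∀ k, 0 ≤ e k) (hC : ∀ k, e k ≤ C) (hL : 0 < L) (hm : m ≠ 0)
    (hS : ∀ N : ℕ, ∑ k ∈ Finset.Icc 2 N,
      tailSup e (2 ^ quasiPolyExp L m k) / (k * Real.logb 2 k) ≤ S) (N : ℕ) :
    ∑ k ∈ Finset.Icc 2 N, e k / (k * Real.logb 2 k) ≤
      C * (1 + m * Real.log (⌈L⌉₊ * 2)) + 2 ^ m * (2 * S) := by
  have hbdd : BddAbove (Set.range e) := ⟨C, Set.forall_mem_range.2 hC⟩
  have hA : 0 < ⌈L⌉₊ := Nat.ceil_pos.2 hL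
  set E : ℕ → ℝ := fun a => tailSup e (2 ^ a)
  have hE₀ : ∀ a, 0 ≤ E a := fun _ => tailSup_nonneg he₀ _
  have hE : Antitone E :=
    (antitone_tailSup hbdd).comp_monotone (pow_right_mono₀ one_le_two)
  have hN : N + 1 ≤ (⌈L⌉₊ * (N + 2)) ^ m :=
    calc N + 1 ≤ N + 2 := Nat.le_succ _
      _ ≤ ⌈L⌉₊ * (N + 2) := Nat.le_mul_of_pos_left _ hA
      _ ≤ (⌈L⌉₊ * (N + 2)) ^ m := Nat.le_self_pow hm _
  calc ∑ k ∈ Finset.Icc 2 N, e k / (k * Real.logb 2 k)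
      ≤ ∑ k ∈ Finset.Icc 2 N, tailSup e k / (k * Real.logb 2 k) := by
        gcongr with k
        · exact mul_logb_two_natCast_nonneg k
        · exact le_tailSup hbdd le_rfl
    _ ≤ ∑ k ∈ Finset.Ico 2 (2 ^ (N + 1)), tailSup e k / (k * Real.logb 2 k) :=
        Finset.sum_le_sum_of_subset_of_nonneg
          (fun k hk => Finset.mem_Ico.2 ⟨(Finset.mem_Icc.1 hk).1,
            (Nat.lt_succ_of_le (Finset.mem_Icc.1 hk).2).trans Nat.lt_two_pow_self⟩)
          fun k _ _ => div_nonneg (tailSup_nonneg he₀ k) (mul_logb_two_natCast_nonneg k)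
    _ ≤ ∑ a ∈ Finset.Ico 1 (N + 1), E a / a :=
        sum_div_mul_logb_le_sum_two_pow_div (antitone_tailSup hbdd) (tailSup_nonneg he₀) N
    _ ≤ ∑ a ∈ Finset.Ico 1 ((⌈L⌉₊ * (N + 2)) ^ m), E a / a :=
        Finset.sum_le_sum_of_subset_of_nonneg (Finset.Ico_subset_Ico_right hN)
          fun a _ _ => div_nonneg (hE₀ a) a.cast_nonneg
    _ ≤ C * (1 + m * Real.log (⌈L⌉₊ * 2)) +
          2 ^ m * ∑ b ∈ Finset.range N, E ((⌈L⌉₊ * (b + 2)) ^ m) / (b + 2) :=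
        sum_Ico_one_div_le_add_sum_mul_pow hE hE₀ (fun _ => tailSup_le hC _) hA m N
    _ ≤ C * (1 + m * Real.log (⌈L⌉₊ * 2)) + 2 ^ m * (2 * S) := by
        gcongr
        exact sum_mul_pow_div_le_of_sum_quasiPolyExp_le hE hE₀ hL.le m hS N

end QuasiPolynomial

theorem log_le_logb_two {x : ℝ} (hx : 1 ≤ x) : Real.log x ≤ Real.logb 2 x :=
  le_div_self (Real.log_nonneg hx) (Real.log_pos one_lt_two) (by linarith [Real.log_two_lt_d9])

theorem log_ceil_mul_two_le {L : ℝ} (hL : 1 ≤ L) : Real.log (⌈L⌉₊ * 2) ≤ 2 + Real.logb 2 L := by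
  have hceil : (⌈L⌉₊ : ℝ) < L + 1 := Nat.ceil_lt_add_one (by linarith)
  have hceil_one : (1 : ℝ) ≤ ⌈L⌉₊ := hL.trans (Nat.le_ceil L)
  calc Real.log (⌈L⌉₊ * 2) ≤ Real.logb 2 (⌈L⌉₊ * 2) := log_le_logb_two (by linarith)
    _ ≤ Real.logb 2 (2 ^ 2 * L) :=
        Real.logb_le_logb_of_le one_lt_two (by positivity) (by linarith)
    _ = 2 + Real.logb 2 L := by
        rw [Real.logb_mul (by norm_num) (by linarith), logb_two_two_pow, Nat.cast_ofNat]

theorem logb_two_logb_two_le_of_le {x y : ℝ} (hx : 1 < x) (hxy : x ≤ y) :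
    Real.logb 2 (Real.logb 2 x) ≤ Real.logb 2 (Real.logb 2 y) :=
  Real.logb_le_logb_of_le one_lt_two (Real.logb_pos one_lt_two hx)
    (Real.logb_le_logb_of_le one_lt_two (by linarith) hxy)

theorem one_le_logb_two_logb_two {x : ℝ} (hx : 4 ≤ x) : 1 ≤ Real.logb 2 (Real.logb 2 x) :=
  calc 1 = Real.logb 2 (Real.logb 2 (2 ^ 2)) := by
        rw [logb_two_two_pow, Nat.cast_ofNat, Real.logb_self_eq_one one_lt_two]
    _ ≤ Real.logb 2 (Real.logb 2 x) := logb_two_logb_two_le_of_le (by norm_num) (by linarith)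

theorem add_le_mul_logb_two_logb_two_mul {C M P Q : ℝ} (hC : 0 ≤ C) (hM : 0 ≤ M) (hP : 2 ≤ P)
    (hQ : 4 ≤ Q) (m : ℕ) :
    C * (1 + m * Real.log (⌈Real.logb 2 P⌉₊ * 2)) +
        2 ^ m * (2 * (M * Real.logb 2 (Real.logb 2 Q))) ≤
      (C * (1 + 3 * m) + 2 ^ m * (2 * M)) * Real.logb 2 (Real.logb 2 (P * Q)) := by
  set D := Real.logb 2 (Real.logb 2 (P * Q))
  have hPD : Real.logb 2 (Real.logb 2 P) ≤ D :=
    logb_two_logb_two_le_of_le (by linarith) (le_mul_of_one_le_right (by linarith) (by linarith))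
  have hQD : Real.logb 2 (Real.logb 2 Q) ≤ D :=
    logb_two_logb_two_le_of_le (by linarith) (le_mul_of_one_le_left (by linarith) (by linarith))
  have hD : 1 ≤ D := (one_le_logb_two_logb_two hQ).trans hQD
  have hlogb : 1 ≤ Real.logb 2 P := by
    rwa [Real.le_logb_iff_rpow_le one_lt_two (by linarith), Real.rpow_one]
  have hlog : Real.log (⌈Real.logb 2 P⌉₊ * 2) ≤ 3 * D := by
    linarith [log_ceil_mul_two_le hlogb]
  calc C * (1 + m * Real.log (⌈Real.logb 2 P⌉₊ * 2)) +
        2 ^ m * (2 * (M * Real.logb 2 (Real.logb 2 Q)))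
      ≤ C * (D + m * (3 * D)) + 2 ^ m * (2 * (M * D)) := by gcongr
    _ = (C * (1 + 3 * m) + 2 ^ m * (2 * M)) * D := by ring

/-- Quasi-polynomial amplification: with
`q(J,k) = 2^(⌊log₂ p(J)·log₂ max(k,1)⌋^m)` for a polynomial `p ≥ 2` in `n−1`
variables and `m ≥ 1`, if `(J,k) ↦ sup_i ε(J, q(J,k)+i)` lies in `FallU` for a
bounded nonnegative `ε`, then `ε` itself lies in `FallU`. -/
theorem stmt19 (m : ℕ) (hm : 1 ≤ m) (n : ℕ) (p : MvPolynomial (Fin n) ℕ)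
    (hp : ∀ J, 2 ≤ MvPolynomial.eval J p)
    (ε : (Fin n → ℕ) × ℕ → ℝ)
    (hεnn : ∀ x, 0 ≤ ε x) (hεbd : ∃ C : ℝ, ∀ x, ε x ≤ C)
    (h : (fun x : (Fin n → ℕ) × ℕ => ⨆ i : ℕ,
        ε (x.1, 2 ^ (⌊Real.logb 2 ((MvPolynomial.eval x.1 p : ℕ) : ℝ) *
            Real.logb 2 ((max x.2 1 : ℕ) : ℝ)⌋₊ ^ m) + i)) ∈ FallU n) :
    ε ∈ FallU n := by
  obtain ⟨C, hC⟩ := hεbd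
  obtain ⟨-, -, M, hM, p', hp', hS⟩ := h
  have hC₀ : 0 ≤ C := (hεnn (0, 0)).trans (hC _)
  refine ⟨hεnn, ⟨C, hC⟩, C * (1 + 3 * m) + 2 ^ m * (2 * M), by positivity, p * p', ?_, ?_⟩
  · intro J
    rw [map_mul]
    nlinarith [hp J, hp' J]
  · intro J N
    have hP : (2 : ℝ) ≤ (MvPolynomial.eval J p : ℕ) := by exact_mod_cast hp J
    have hQ : (4 : ℝ) ≤ (MvPolynomial.eval J p' : ℕ) := by exact_mod_cast hp' J
    have hL : 0 < Real.logb 2 (MvPolynomial.eval J p : ℕ) :=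
      Real.logb_pos one_lt_two (by linarith)
    rw [map_mul, Nat.cast_mul]
    exact (sum_div_mul_logb_le_of_tailSup_quasiPolyExp (fun k => hεnn (J, k))
      (fun k => hC (J, k)) hL (Nat.one_le_iff_ne_zero.1 hm) (hS J) N).trans
      (add_le_mul_logb_two_logb_two_mul hC₀ hM.le hP hQ m)
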